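/- Let G be a simple graph, H a connected subgraph of G, and j ≥ 1 an integer. Let G_j be the graph obtained from G by replacing every edge e = {u,v} of G that is not an edge of H by a path u = p₀^e, p₁^e, …, p_j^e = v consisting of j edges through j−1 new internal vertices (distinct for different edges), keeping all vertices of G and all edges of H. Then G admits a retraction to H with stretch at most j if and only if G_j admits a retraction to H with stretch at most 1. -/

import Mathlib

/-- The vertex type of the graph `G_j` obtained from `G` by replacing each edge of `G`
not in `H` by a path of `j` edges: the original vertices together with `j − 1` new
internal vertices for each replaced edge. -/
def SubdivVerts {V : Type*} (G : SimpleGraph V) (H : G.Subgraph) (j : ℕ) : Type _ :=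
  V ⊕ ({e : Sym2 V // e ∈ G.edgeSet ∧ e ∉ H.edgeSet} × Fin (j - 1))

/-- The graph `G_j`: each edge `e = {u,v}` of `G` not in `H` is replaced by a path
`u = p₀, p₁, …, p_j = v` of `j` edges through the `j − 1` new internal vertices
associated to `e` (where `(u, v) = Quot.out e` is a fixed ordering of the endpoints
of `e`); all vertices of `G` and all edges of `H` are kept.  (For `j = 1`, the
replaced edges are kept as they are.) -/
def subdividedGraph {V : Type*} (G : SimpleGraph V) (H : G.Subgraph) (j : ℕ) :
    SimpleGraph (SubdivVerts G H j) :=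
  SimpleGraph.fromRel (fun w w' =>
    match w, w' with
    | .inl u, .inl v => H.Adj u v ∨ (j = 1 ∧ G.Adj u v ∧ ¬H.Adj u v)
    | .inl u, .inr (e, i) =>
        (i.val = 0 ∧ u = (Quot.out e.val).1) ∨ (i.val + 2 = j ∧ u = (Quot.out e.val).2)
    | .inr (e, i), .inr (e', i') => e = e' ∧ i'.val = i.val + 1
    | .inr _, .inl _ => False)

/-!
Let `f` map the vertices of `G` to those of a graph `K`. Extending `f` to the path `p₀, …, p_j`
that replaces an edge `{u, v}`, so that consecutive vertices go to equal or adjacent ones, amounts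
to choosing a sequence of `j` such steps in `K` from `f u` to `f v`. It exists exactly when `f u`
and `f v` are at distance at most `j`, since a shorter walk can wait at its end. On the kept edges
of `H`, a retraction to `H` automatically has stretch at most `1`.
-/

theorem exists_rel_of_fromRel_adj {U : Type*} {r : U → U → Prop} {a b : U}
    (h : (SimpleGraph.fromRel r).Adj a b) : ∃ x y, r x y ∧ s(a, b) = s(x, y) := by
  rcases ((SimpleGraph.fromRel_adj r a b).1 h).2 with hab | hba
  exacts [⟨a, b, hab, rfl⟩, ⟨b, a, hba, Sym2.eq_swap⟩]

theorem edist_le_iff_exists_edist_succ_le_one {W : Type*} {K : SimpleGraph W} {x y : W} {n : ℕ} :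
    K.edist x y ≤ n ↔
      ∃ p : ℕ → W, p 0 = x ∧ p n = y ∧ ∀ i < n, K.edist (p i) (p (i + 1)) ≤ 1 := by
  constructor
  · intro h
    obtain ⟨w, hw⟩ :=
      SimpleGraph.exists_walk_of_edist_ne_top (h.trans_lt (ENat.natCast_lt_top n)).ne
    have hwn : w.length ≤ n := by exact_mod_cast hw.trans_le h
    refine ⟨w.getVert, w.getVert_zero, w.getVert_of_length_le hwn, fun i _ => ?_⟩
    rw [SimpleGraph.edist_le_one_iff_adj_or_eq]
    rcases lt_or_ge i w.length with hi | hi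
    · exact .inl (w.adj_getVert_succ hi)
    · right
      rw [w.getVert_of_length_le hi, w.getVert_of_length_le (hi.trans i.le_succ)]
  · rintro ⟨p, rfl, rfl, hp⟩
    induction n with
    | zero => simp
    | succ n ih =>
      calc K.edist (p 0) (p (n + 1))
          ≤ K.edist (p 0) (p n) + K.edist (p n) (p (n + 1)) := SimpleGraph.edist_triangle
        _ ≤ n + 1 := add_le_add (ih fun i hi => hp i (by lia)) (hp n n.lt_succ_self)
        _ = ↑(n + 1) := by push_cast; rfl

/-- A map `f` from the vertices of `G` to those of `K` has stretch at most `n`. The distance in `K`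
is the extended one, so that, unlike with the junk value `K.dist x y = 0`, vertices in different
components of `K` are far apart. -/
def HasStretchLE {V W : Type*} (G : SimpleGraph V) (K : SimpleGraph W) (f : V → W) (n : ℕ∞) :
    Prop :=
  ∀ u v, G.Adj u v → K.edist (f u) (f v) ≤ n

section Stretch

variable {V W : Type*} {G : SimpleGraph V} {H : G.Subgraph} {K : SimpleGraph W}

theorem HasStretchLE.mono {f : V → W} {m n : ℕ∞} (hf : HasStretchLE G K f m) (hmn : m ≤ n) :
    HasStretchLE G K f n :=
  fun u v huv => (hf u v huv).trans hmn

theorem hasStretchLE_one_iff {f : V → W} :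
    HasStretchLE G K f 1 ↔ ∀ u v, G.Adj u v → f u = f v ∨ K.Adj (f u) (f v) := by
  simp only [HasStretchLE, SimpleGraph.edist_le_one_iff_adj_or_eq, or_comm]

theorem hasStretchLE_iff_dist_le (hK : K.Preconnected) {f : V → W} {n : ℕ} :
    HasStretchLE G K f n ↔ ∀ u v, G.Adj u v → K.dist (f u) (f v) ≤ n := by
  simp only [HasStretchLE, ← (hK _ _).coe_dist_eq_edist, Nat.cast_le]

theorem hasStretchLE_spanningCoe_of_retraction {f : V → H.verts} (hf : ∀ a : H.verts, f a = a) :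
    HasStretchLE H.spanningCoe H.coe f 1 := by
  rw [hasStretchLE_one_iff]
  intro u v huv
  rw [hf ⟨u, H.edge_vert huv⟩, hf ⟨v, H.edge_vert huv.symm⟩]
  exact .inr huv

end Stretch

/-- An edge of `G` outside `H`, that is, one of those replaced by a path in `G_j`. -/
abbrev ReplacedEdge {V : Type*} (G : SimpleGraph V) (H : G.Subgraph) : Type _ :=
  {e : Sym2 V // e ∈ G.edgeSet ∧ e ∉ H.edgeSet}

namespace ReplacedEdge

variable {V : Type*} {G : SimpleGraph V} {H : G.Subgraph} {j : ℕ}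

/-- The endpoint `p₀` of the path replacing `e`. -/
noncomputable def source (e : ReplacedEdge G H) : V := (Quot.out e.val).1

/-- The endpoint `p_j` of the path replacing `e`. -/
noncomputable def target (e : ReplacedEdge G H) : V := (Quot.out e.val).2

theorem mk_source_target (e : ReplacedEdge G H) : s(e.source, e.target) = e.val :=
  Quot.out_eq e.val

theorem adj_source_target (e : ReplacedEdge G H) : G.Adj e.source e.target := by
  rw [← SimpleGraph.mem_edgeSet, e.mk_source_target]
  exact e.property.1

/-- The vertex `pᵢ` of the path replacing `e` in `G_j`, repeating `p_j` for `i > j`. The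
internal vertex `pᵢ` is the one with index `i - 1`. -/
noncomputable def path (e : ReplacedEdge G H) (j : ℕ) : ℕ → SubdivVerts G H j
  | 0 => .inl e.source
  | i + 1 => if hi : i < j - 1 then .inr (e, ⟨i, hi⟩) else .inl e.target

theorem path_zero (e : ReplacedEdge G H) (j : ℕ) : e.path j 0 = .inl e.source := rfl

theorem path_succ_of_lt (e : ReplacedEdge G H) {i : ℕ} (hi : i < j - 1) :
    e.path j (i + 1) = .inr (e, ⟨i, hi⟩) :=
  dif_pos hi

theorem path_self (e : ReplacedEdge G H) (hj : 1 ≤ j) : e.path j j = .inl e.target := by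
  obtain ⟨k, rfl⟩ := Nat.exists_eq_add_of_le' hj
  exact dif_neg (lt_irrefl k)

end ReplacedEdge

section Subdivision

variable {V W : Type*} {G : SimpleGraph V} {H : G.Subgraph} {K : SimpleGraph W} {j : ℕ}

theorem subdividedGraph_adj_inl_of_adj {u v : V} (huv : H.Adj u v) :
    (subdividedGraph G H j).Adj (.inl u) (.inl v) :=
  (SimpleGraph.fromRel_adj _ _ _).2 ⟨fun h => huv.ne (Sum.inl_injective h), .inl (.inl huv)⟩

theorem subdividedGraph_adj_path (e : ReplacedEdge G H) {i : ℕ} (hi : i < j) :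
    (subdividedGraph G H j).Adj (e.path j i) (e.path j (i + 1)) := by
  rw [subdividedGraph, SimpleGraph.fromRel_adj]
  have hH : ¬ H.Adj e.source e.target := by
    rw [← SimpleGraph.Subgraph.mem_edgeSet, e.mk_source_target]
    exact e.property.2
  obtain rfl | hlast := (Nat.succ_le_of_lt hi).eq_or_lt
  · rw [e.path_self i.succ_pos]
    cases i with
    | zero =>
      exact ⟨fun h => e.adj_source_target.ne (Sum.inl_injective h),
        .inl (.inr ⟨rfl, e.adj_source_target, hH⟩)⟩
    | succ i =>
      rw [e.path_succ_of_lt (by lia)]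
      exact ⟨Sum.inr_ne_inl, .inr (.inr ⟨rfl, rfl⟩)⟩
  · rw [e.path_succ_of_lt (by lia)]
    cases i with
    | zero => exact ⟨Sum.inl_ne_inr, .inl (.inl ⟨rfl, rfl⟩)⟩
    | succ i =>
      rw [e.path_succ_of_lt (by lia)]
      refine ⟨fun h => ?_, .inl ⟨rfl, rfl⟩⟩
      exact i.succ_ne_self (congrArg (fun x => x.2.val) (Sum.inr_injective h)).symm

theorem exists_edge_of_subdividedGraph_adj {w w' : SubdivVerts G H j}
    (h : (subdividedGraph G H j).Adj w w') :
    (∃ u v, H.Adj u v ∧ s(w, w') = s(.inl u, .inl v)) ∨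
      ∃ e : ReplacedEdge G H, ∃ i < j, s(w, w') = s(e.path j i, e.path j (i + 1)) := by
  obtain ⟨x, y, hrel, hs⟩ := exists_rel_of_fromRel_adj h
  rw [hs]
  rcases x with u | ⟨e, i⟩ <;> rcases y with v | ⟨e', i'⟩
  · rcases hrel with hH | ⟨rfl, hG, hH⟩
    · exact .inl ⟨u, v, hH, rfl⟩
    · let e : ReplacedEdge G H := ⟨s(u, v), hG, hH⟩
      refine .inr ⟨e, 0, one_pos, ?_⟩
      rw [e.path_zero, e.path_self le_rfl]
      exact congrArg (Sym2.map Sum.inl) e.mk_source_target.symm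
  · right
    rcases hrel with ⟨hidx, rfl⟩ | ⟨hidx, rfl⟩
    · refine ⟨e', 0, by lia, ?_⟩
      rw [← ReplacedEdge.path_succ_of_lt e' i'.isLt, hidx]
      rfl
    · refine ⟨e', i' + 1, by lia, ?_⟩
      rw [← ReplacedEdge.path_succ_of_lt e' i'.isLt, hidx, ReplacedEdge.path_self e' (by lia)]
      exact Sym2.eq_swap
  · exact hrel.elim
  · obtain ⟨rfl, hidx⟩ := hrel
    refine .inr ⟨e, i + 1, by lia, ?_⟩
    rw [← ReplacedEdge.path_succ_of_lt e i.isLt, ← ReplacedEdge.path_succ_of_lt e i'.isLt, hidx]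

theorem hasStretchLE_subdividedGraph_iff {g : SubdivVerts G H j → W} {n : ℕ∞} :
    HasStretchLE (subdividedGraph G H j) K g n ↔
      HasStretchLE H.spanningCoe K (fun v => g (.inl v)) n ∧
        ∀ e : ReplacedEdge G H, ∀ i < j, K.edist (g (e.path j i)) (g (e.path j (i + 1))) ≤ n := by
  constructor
  · exact fun hg => ⟨fun u v huv => hg _ _ (subdividedGraph_adj_inl_of_adj huv),
      fun e i hi => hg _ _ (subdividedGraph_adj_path e hi)⟩
  · rintro ⟨hH, hpath⟩ w w' hww'
    rcases exists_edge_of_subdividedGraph_adj hww' with ⟨u, v, huv, hs⟩ | ⟨e, i, hi, hs⟩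
    · rcases Sym2.eq_iff.1 hs with ⟨rfl, rfl⟩ | ⟨rfl, rfl⟩
      exacts [hH u v huv, SimpleGraph.edist_comm.trans_le (hH u v huv)]
    · rcases Sym2.eq_iff.1 hs with ⟨rfl, rfl⟩ | ⟨rfl, rfl⟩
      exacts [hpath e i hi, SimpleGraph.edist_comm.trans_le (hpath e i hi)]

theorem hasStretchLE_iff_replacedEdge {f : V → W} {n : ℕ∞} :
    HasStretchLE G K f n ↔ HasStretchLE H.spanningCoe K f n ∧
      ∀ e : ReplacedEdge G H, K.edist (f e.source) (f e.target) ≤ n := by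
  constructor
  · exact fun hf => ⟨fun u v huv => hf u v huv.adj_sub, fun e => hf _ _ e.adj_source_target⟩
  · rintro ⟨hH, hrepl⟩ u v huv
    by_cases hHuv : H.Adj u v
    · exact hH u v hHuv
    · let e : ReplacedEdge G H := ⟨s(u, v), huv, hHuv⟩
      have he := hrepl e
      rcases Sym2.eq_iff.1 e.mk_source_target with ⟨hu, hv⟩ | ⟨hv, hu⟩
      · rwa [hu, hv] at he
      · rwa [hu, hv, SimpleGraph.edist_comm] at he

theorem exists_extension_along_paths (hj : 1 ≤ j) {f : V → W} {q : ReplacedEdge G H → ℕ → W}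
    (hq_zero : ∀ e, q e 0 = f e.source) (hq_last : ∀ e, q e j = f e.target) :
    ∃ g : SubdivVerts G H j → W, (∀ v, g (.inl v) = f v) ∧
      ∀ e, ∀ i ≤ j, g (ReplacedEdge.path e j i) = q e i := by
  refine ⟨Sum.elim f fun x => q x.1 (x.2 + 1), fun _ => rfl, fun e i hi => ?_⟩
  rcases hi.eq_or_lt with rfl | hlt
  · rw [e.path_self hj, hq_last]
    rfl
  · cases i with
    | zero => exact (hq_zero e).symm
    | succ i =>
      rw [e.path_succ_of_lt (by lia)]
      rfl

theorem exists_extension_subdividedGraph_iff (hj : 1 ≤ j) {f : V → W} :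
    (∃ g : SubdivVerts G H j → W,
        (∀ v, g (.inl v) = f v) ∧ HasStretchLE (subdividedGraph G H j) K g 1) ↔
      HasStretchLE H.spanningCoe K f 1 ∧ HasStretchLE G K f j := by
  constructor
  · rintro ⟨g, hgf, hg⟩
    obtain rfl : (fun v => g (.inl v)) = f := funext hgf
    obtain ⟨hH, hpath⟩ := hasStretchLE_subdividedGraph_iff.1 hg
    refine ⟨hH, hasStretchLE_iff_replacedEdge.2 ⟨hH.mono (by exact_mod_cast hj), fun e => ?_⟩⟩
    exact edist_le_iff_exists_edist_succ_le_one.2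
      ⟨fun i => g (e.path j i), rfl, congrArg g (e.path_self hj), hpath e⟩
  · rintro ⟨hH, hf⟩
    choose q hq_zero hq_last hq using fun e : ReplacedEdge G H =>
      edist_le_iff_exists_edist_succ_le_one.1 (hf _ _ e.adj_source_target)
    obtain ⟨g, hgf, hgq⟩ := exists_extension_along_paths hj hq_zero hq_last
    refine ⟨g, hgf, hasStretchLE_subdividedGraph_iff.2 ⟨?_, fun e i hi => ?_⟩⟩
    · simpa only [hgf] using hH
    · rw [hgq e i hi.le, hgq e (i + 1) hi]
      exact hq e i hi

end Subdivision

theorem retraction_iff_subdivided_stretch_one_general {V : Type*} (G : SimpleGraph V)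
    (H : G.Subgraph) (j : ℕ) (hj : 1 ≤ j) :
    (∃ f : V → H.verts, (∀ a : H.verts, f (a : V) = a) ∧ HasStretchLE G H.coe f j) ↔
    (∃ g : SubdivVerts G H j → H.verts, (∀ a : H.verts, g (Sum.inl (a : V)) = a) ∧
        HasStretchLE (subdividedGraph G H j) H.coe g 1) := by
  constructor
  · rintro ⟨f, hfix, hf⟩
    obtain ⟨g, hgf, hg⟩ := (exists_extension_subdividedGraph_iff hj).2
      ⟨hasStretchLE_spanningCoe_of_retraction hfix, hf⟩
    exact ⟨g, fun a => (hgf a).trans (hfix a), hg⟩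
  · rintro ⟨g, hfix, hg⟩
    exact ⟨fun v => g (.inl v), hfix,
      ((exists_extension_subdividedGraph_iff hj).1 ⟨g, fun _ => rfl, hg⟩).2⟩

/-- Let `H` be a connected subgraph of `G` and `j ≥ 1`.  Then `G`
admits a retraction to `H` of stretch at most `j` if and only if the subdivided graph
`G_j` admits a retraction to `H` of stretch 1 (i.e. every edge is mapped to a single
vertex of `H` or to an edge of `H`). -/
theorem retraction_iff_subdivided_stretch_one {V : Type*} (G : SimpleGraph V)
    (H : G.Subgraph) (hH : H.coe.Connected) (j : ℕ) (hj : 1 ≤ j) :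
    (∃ f : V → H.verts, (∀ a : H.verts, f (a : V) = a) ∧
        ∀ u v : V, G.Adj u v → H.coe.dist (f u) (f v) ≤ j) ↔
    (∃ g : SubdivVerts G H j → H.verts,
        (∀ a : H.verts, g (Sum.inl (a : V)) = a) ∧
        ∀ w w' : SubdivVerts G H j, (subdividedGraph G H j).Adj w w' →
          g w = g w' ∨ H.coe.Adj (g w) (g w')) := by
  simpa only [hasStretchLE_iff_dist_le hH.preconnected, hasStretchLE_one_iff] using
    retraction_iff_subdivided_stretch_one_general G H j hj
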